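/- Fix p ∈ (0,1). For each n, let d(n) ∈ ℕ and α = α(n) ∈ ℝ^{d(n)} have entries in [0,1] with at least one entry equal to 1. Assume n³·(‖α‖₄/‖α‖₂)⁴ → 0 as n → ∞. Let M(n) be the n×n symmetric random matrix with zero diagonal and i.i.d. standard Gaussian entries above the diagonal, let K_p(M(n)) be the random graph with edge {i,j} present iff M(n)_{ij} ≥ Φ^{−1}(p) (Φ the standard Gaussian CDF, threshold chosen so each edge appears with probability p), and let H_{p,α}(M(n)) be the random graph with edge {i,j} present iff M(n)_{ij} ≥ t_{p,α}/‖α‖₂. Then TV(K_p(M(n)), H_{p,α}(M(n))) → 0. -/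

import Mathlib

open MeasureTheory ProbabilityTheory Real Filter
open scoped Classical ENNReal NNReal

noncomputable section

/-- Euclidean inner product on `Fin d → ℝ`. -/
def dotp {d : ℕ} (x y : Fin d → ℝ) : ℝ := ∑ i, x i * y i

/-- The `q`-norm of a vector `α ∈ ℝ^d`. -/
def nrm {d : ℕ} (q : ℕ) (α : Fin d → ℝ) : ℝ := (∑ i, α i ^ q) ^ ((1 : ℝ) / q)

/-- The centered Gaussian measure `N(0, D_α)` on `ℝ^d`, `D_α = diag α`. -/
def gaussPi (d : ℕ) (α : Fin d → ℝ) : Measure (Fin d → ℝ) :=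
  Measure.pi fun i => gaussianReal 0 (Real.toNNReal (α i))

/-- The law of `n` i.i.d. samples from `N(0, D_α)`. -/
def sampleMeasure (n d : ℕ) (α : Fin d → ℝ) : Measure (Fin n → Fin d → ℝ) :=
  Measure.pi fun _ => gaussPi d α

/-- `t` is the `p`-th upper quantile of `⟨X₁, X₂⟩` for `X₁, X₂` i.i.d. `N(0, D_α)`. -/
def IsThreshold (d : ℕ) (α : Fin d → ℝ) (p t : ℝ) : Prop :=
  ((gaussPi d α).prod (gaussPi d α)) {xy | t ≤ dotp xy.1 xy.2} = ENNReal.ofReal p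

instance (n : ℕ) : MeasurableSpace (SimpleGraph (Fin n)) := ⊤

/-- The anisotropic random geometric graph `G(n, p, α)`, with threshold `t = t_{p,α}`. -/
def geomGraph (n d : ℕ) (α : Fin d → ℝ) (t : ℝ) : Measure (SimpleGraph (Fin n)) :=
  Measure.map (fun X => SimpleGraph.fromRel fun i j => t ≤ dotp (X i) (X j))
    (sampleMeasure n d α)

/-- The Erdős–Rényi random graph `G(n, p)`. -/
def erGraph (n : ℕ) (p : ℝ) : Measure (SimpleGraph (Fin n)) :=
  Measure.map (fun x => SimpleGraph.fromRel fun i j => x s(i, j) ≤ p)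
    (Measure.pi fun _ : Sym2 (Fin n) => volume.restrict (Set.Icc (0 : ℝ) 1))

/-- Total variation distance between two measures. -/
def tvDist {Ω : Type*} [MeasurableSpace Ω] (μ ν : Measure Ω) : ℝ :=
  ⨆ s : {s : Set Ω // MeasurableSet s}, |(μ s.1).toReal - (ν s.1).toReal|

/-- The random graph obtained by thresholding i.i.d. standard Gaussian edge weights
`M(n)_{ij}` at level `thr`: the edge `{i,j}` is present iff `M(n)_{ij} ≥ thr`. -/
def gaussThreshGraph (n : ℕ) (thr : ℝ) : Measure (SimpleGraph (Fin n)) :=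
  Measure.map (fun (x : Sym2 (Fin n) → ℝ) => SimpleGraph.fromRel fun i j => thr ≤ x s(i, j))
    (Measure.pi fun _ : Sym2 (Fin n) => gaussianReal 0 1)

/-!
The `χ²`-divergence tensorizes, `1 + χ²(⊗ μᵢ ‖ ⊗ νᵢ) = ∏ (1 + χ²(μᵢ ‖ νᵢ))`, and dominates the
squared total variation distance. Hence two threshold graphs with edge probabilities `p` and `q`
are at distance at most `√(exp (n² (q - p)² / (p (1 - p))) - 1)`, and it suffices that
`n² (q - p)² → 0`.

Conditionally on `X₁`, the inner product `⟨X₁, X₂⟩` is a centered Gaussian whose variance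
`V = ∑ αᵢ X₁ᵢ²` has mean `‖α‖₂²` and standard deviation of order `‖α‖₄²`. Gaussian tails are
Lipschitz in the relative error of the variance, uniformly in the threshold, because the derivative
of `v ↦ 1 - Φ(t / √v)` is `x φ(x) / (2 v)` with `x = t / √v`, and `x φ(x)` is bounded. Averaging
over `X₁` gives `|q - p| = O((‖α‖₄ / ‖α‖₂)²)`.
-/

section TotalVariation

variable {Ω Ω' : Type*} [MeasurableSpace Ω] [MeasurableSpace Ω'] {μ ν : Measure Ω}

lemma tvDist_nonneg : 0 ≤ tvDist μ ν :=
  Real.iSup_nonneg fun _ => abs_nonneg _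

lemma tvDist_comm : tvDist μ ν = tvDist ν μ := by
  simp only [tvDist, abs_sub_comm]

lemma tvDist_le_of_forall {c : ℝ}
    (h : ∀ s, MeasurableSet s → |μ.real s - ν.real s| ≤ c) : tvDist μ ν ≤ c :=
  haveI : Nonempty {s : Set Ω // MeasurableSet s} := ⟨⟨∅, MeasurableSet.empty⟩⟩
  ciSup_le fun s => h s s.2

variable [IsFiniteMeasure μ] [IsFiniteMeasure ν]

lemma abs_measureReal_sub_le_tvDist {s : Set Ω} (hs : MeasurableSet s) :
    |μ.real s - ν.real s| ≤ tvDist μ ν := by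
  have hbdd : BddAbove (Set.range fun s : {s : Set Ω // MeasurableSet s} =>
      |μ.real s - ν.real s|) := by
    refine ⟨μ.real Set.univ + ν.real Set.univ, Set.forall_mem_range.2 fun s => ?_⟩
    calc |μ.real s - ν.real s| ≤ |μ.real s| + |ν.real s| := abs_sub _ _
      _ ≤ μ.real Set.univ + ν.real Set.univ := by
        simp only [abs_of_nonneg measureReal_nonneg]
        exact add_le_add (measureReal_mono (Set.subset_univ _))
          (measureReal_mono (Set.subset_univ _))
  exact le_ciSup hbdd ⟨s, hs⟩

lemma tvDist_map_le {f : Ω → Ω'} (hf : Measurable f) :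
    tvDist (μ.map f) (ν.map f) ≤ tvDist μ ν := by
  refine tvDist_le_of_forall fun s hs => ?_
  rw [map_measureReal_apply hf hs, map_measureReal_apply hf hs]
  exact abs_measureReal_sub_le_tvDist (hf hs)

end TotalVariation

section ChiSquare

/-- The chi-square divergence `χ²(μ ‖ ν)` between measures on a finite type, with respect to the
reference measure `ν`. It is only meaningful when every point has positive `ν`-mass, since the
points of zero mass contribute `x / 0 = 0`. -/
def chiSqDiv {Ω : Type*} [Fintype Ω] [MeasurableSpace Ω] (μ ν : Measure Ω) : ℝ :=
  ∑ ω, (μ.real {ω} - ν.real {ω}) ^ 2 / ν.real {ω}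

variable {Ω : Type*} [Fintype Ω] [MeasurableSpace Ω] [MeasurableSingletonClass Ω]
  {μ ν : Measure Ω} [IsProbabilityMeasure μ] [IsProbabilityMeasure ν]

lemma one_add_chiSqDiv (hν : ∀ ω, 0 < ν.real {ω}) :
    1 + chiSqDiv μ ν = ∑ ω, μ.real {ω} ^ 2 / ν.real {ω} := by
  have hexpand (ω : Ω) : (μ.real {ω} - ν.real {ω}) ^ 2 / ν.real {ω}
      = μ.real {ω} ^ 2 / ν.real {ω} - 2 * μ.real {ω} + ν.real {ω} := by
    field_simp [(hν ω).ne']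
    ring
  simp only [chiSqDiv, hexpand, Finset.sum_add_distrib, Finset.sum_sub_distrib, ← Finset.mul_sum,
    sum_measureReal_singleton, Finset.coe_univ, probReal_univ]
  ring

lemma tvDist_le_sqrt_chiSqDiv (hν : ∀ ω, 0 < ν.real {ω}) :
    tvDist μ ν ≤ √(chiSqDiv μ ν) := by
  refine tvDist_le_of_forall fun s _ => Real.le_sqrt_of_sq_le ?_
  have hs (ρ : Measure Ω) [IsProbabilityMeasure ρ] : ρ.real s = ∑ ω ∈ s.toFinset, ρ.real {ω} := by
    rw [sum_measureReal_singleton, Set.coe_toFinset]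
  have hle : |μ.real s - ν.real s| ≤ ∑ ω, |μ.real {ω} - ν.real {ω}| := by
    rw [hs μ, hs ν, ← Finset.sum_sub_distrib]
    exact (Finset.abs_sum_le_sum_abs _ _).trans
      (Finset.sum_le_univ_sum_of_nonneg fun _ => abs_nonneg _)
  calc |μ.real s - ν.real s| ^ 2
      ≤ (∑ ω, |μ.real {ω} - ν.real {ω}|) ^ 2 / ∑ ω, ν.real {ω} := by
        rw [sum_measureReal_singleton, Finset.coe_univ, probReal_univ, div_one]
        gcongr
    _ ≤ ∑ ω, |μ.real {ω} - ν.real {ω}| ^ 2 / ν.real {ω} :=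
        Finset.sq_sum_div_le_sum_sq_div _ _ fun ω _ => hν ω
    _ = chiSqDiv μ ν := by simp only [sq_abs, chiSqDiv]

lemma chiSqDiv_bool {μ ν : Measure Bool} [IsProbabilityMeasure μ] [IsProbabilityMeasure ν]
    (hν : ν.real {true} ∈ Set.Ioo (0 : ℝ) 1) :
    chiSqDiv μ ν = (μ.real {true} - ν.real {true}) ^ 2
      / (ν.real {true} * (1 - ν.real {true})) := by
  have hfalse (ρ : Measure Bool) [IsProbabilityMeasure ρ] :
      ρ.real {false} = 1 - ρ.real {true} := by
    rw [← probReal_compl_eq_one_sub (measurableSet_singleton true), Bool.compl_singleton,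
      Bool.not_true]
  have h0 : ν.real {true} ≠ 0 := hν.1.ne'
  have h1 : 1 - ν.real {true} ≠ 0 := (sub_pos.2 hν.2).ne'
  simp only [chiSqDiv, Fintype.sum_bool, hfalse]
  field_simp
  ring

section Pi

lemma pi_measureReal_singleton {ι : Type*} [Fintype ι] {Ω : ι → Type*}
    [∀ i, MeasurableSpace (Ω i)] (μ : ∀ i, Measure (Ω i)) [∀ i, SigmaFinite (μ i)]
    (ω : ∀ i, Ω i) : (Measure.pi μ).real {ω} = ∏ i, (μ i).real {ω i} := by
  simp only [measureReal_def, Measure.pi_singleton, ENNReal.toReal_prod]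

lemma pi_measureReal_singleton_pos {ι : Type*} [Fintype ι] {Ω : ι → Type*}
    [∀ i, MeasurableSpace (Ω i)] {μ : ∀ i, Measure (Ω i)} [∀ i, SigmaFinite (μ i)]
    (hμ : ∀ i ω, 0 < (μ i).real {ω}) (ω : ∀ i, Ω i) : 0 < (Measure.pi μ).real {ω} := by
  rw [pi_measureReal_singleton]
  exact Finset.prod_pos fun i _ => hμ i (ω i)

variable {ι : Type*} [Fintype ι] {Ω : ι → Type*} [∀ i, Fintype (Ω i)]
  [∀ i, MeasurableSpace (Ω i)] [∀ i, MeasurableSingletonClass (Ω i)]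
  {μ ν : ∀ i, Measure (Ω i)} [∀ i, IsProbabilityMeasure (μ i)] [∀ i, IsProbabilityMeasure (ν i)]

lemma one_add_chiSqDiv_pi (hν : ∀ i ω, 0 < (ν i).real {ω}) :
    1 + chiSqDiv (Measure.pi μ) (Measure.pi ν) = ∏ i, (1 + chiSqDiv (μ i) (ν i)) := by
  simp only [one_add_chiSqDiv (pi_measureReal_singleton_pos hν), one_add_chiSqDiv (hν _),
    pi_measureReal_singleton, ← Finset.prod_pow, ← Finset.prod_div_distrib, Finset.prod_univ_sum,
    Fintype.piFinset_univ]

lemma tvDist_pi_le (hν : ∀ i ω, 0 < (ν i).real {ω}) :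
    tvDist (Measure.pi μ) (Measure.pi ν) ≤ √(exp (∑ i, chiSqDiv (μ i) (ν i)) - 1) := by
  refine (tvDist_le_sqrt_chiSqDiv (pi_measureReal_singleton_pos hν)).trans (Real.sqrt_le_sqrt ?_)
  rw [le_sub_iff_add_le', one_add_chiSqDiv_pi hν, exp_sum]
  refine Finset.prod_le_prod (fun i _ => ?_) fun i _ => ?_
  · rw [one_add_chiSqDiv (hν i)]
    positivity
  · rw [add_comm]
    exact add_one_le_exp _

end Pi

end ChiSquare

section GaussianTail

/-- The upper tail `1 - Φ` of the standard Gaussian distribution. -/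
def stdGaussianTail (x : ℝ) : ℝ := (gaussianReal 0 1).real (Set.Ici x)

lemma hasDerivAt_stdGaussianTail (x : ℝ) :
    HasDerivAt stdGaussianTail (-gaussianPDFReal 0 1 x) x := by
  have hcont : Continuous (gaussianPDFReal 0 1) := by
    rw [gaussianPDFReal_def]
    fun_prop
  have hint : Integrable (gaussianPDFReal 0 1) := integrable_gaussianPDFReal 0 1
  have htail (y : ℝ) : stdGaussianTail y = ∫ z in Set.Ici y, gaussianPDFReal 0 1 z := by
    rw [stdGaussianTail, measureReal_def, gaussianReal_apply_eq_integral 0 one_ne_zero,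
      ENNReal.toReal_ofReal (integral_nonneg fun z => gaussianPDFReal_nonneg 0 1 z)]
  have hsub (y : ℝ) :
      stdGaussianTail y = stdGaussianTail x - ∫ z in x..y, gaussianPDFReal 0 1 z := by
    rw [htail, htail, ← intervalIntegral.integral_Ici_sub_Ici' hint.integrableOn hint.integrableOn,
      sub_sub_cancel]
  rw [funext hsub]
  exact (hcont.integral_hasStrictDerivAt x x).hasDerivAt.const_sub _

lemma abs_mul_gaussianPDFReal_le_one (x : ℝ) : |x| * gaussianPDFReal 0 1 x ≤ 1 := by
  have hnorm : (√(2 * π))⁻¹ ≤ 1 := by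
    refine inv_le_one_of_one_le₀ (Real.one_le_sqrt.2 ?_)
    linarith [pi_gt_three]
  have hexp : |x| ≤ exp (x ^ 2 / 2) := by
    linarith [add_one_le_exp (x ^ 2 / 2), two_mul_le_add_sq 1 |x|, sq_abs x]
  calc |x| * gaussianPDFReal 0 1 x = |x| * ((√(2 * π))⁻¹ * exp (-(x ^ 2 / 2))) := by
        simp [gaussianPDFReal_def, neg_div]
    _ ≤ exp (x ^ 2 / 2) * (1 * exp (-(x ^ 2 / 2))) := by gcongr
    _ = 1 := by rw [one_mul, ← exp_add, add_neg_cancel, exp_zero]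

lemma gaussianReal_zero_eq_map (v : ℝ≥0) :
    gaussianReal 0 v = (gaussianReal 0 1).map (√v * ·) := by
  rw [gaussianReal_map_const_mul, mul_zero]
  congr 1
  ext
  simp

lemma gaussianReal_zero_real_Ici {v : ℝ≥0} (hv : v ≠ 0) (t : ℝ) :
    (gaussianReal 0 v).real (Set.Ici t) = stdGaussianTail (t / √v) := by
  have hsqrt : 0 < √(v : ℝ) := Real.sqrt_pos.2 (NNReal.coe_pos.2 (pos_iff_ne_zero.2 hv))
  rw [gaussianReal_zero_eq_map, map_measureReal_apply (by fun_prop) measurableSet_Ici,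
    stdGaussianTail]
  congr 1
  ext y
  rw [Set.mem_preimage, Set.mem_Ici, Set.mem_Ici, div_le_iff₀' hsqrt]

lemma hasDerivAt_stdGaussianTail_div_sqrt (t : ℝ) {v : ℝ} (hv : 0 < v) :
    HasDerivAt (fun u => stdGaussianTail (t / √u))
      (gaussianPDFReal 0 1 (t / √v) * (t / √v) / (2 * v)) v := by
  have hsqrt : √v ≠ 0 := (Real.sqrt_pos.2 hv).ne'
  have hinner : HasDerivAt (fun u => t / √u) (-(t / √v) / (2 * v)) v := by
    refine ((hasDerivAt_const v t).fun_div (Real.hasDerivAt_sqrt hv.ne') hsqrt).congr_deriv ?_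
    rw [Real.sq_sqrt hv.le]
    field_simp
    ring
  refine ((hasDerivAt_stdGaussianTail (t / √v)).comp v hinner).congr_deriv ?_
  ring

lemma abs_stdGaussianTail_div_sqrt_sub_le (t : ℝ) {u v : ℝ} (hv : 0 < v) (huv : v / 2 ≤ u) :
    |stdGaussianTail (t / √u) - stdGaussianTail (t / √v)| ≤ v⁻¹ * |u - v| := by
  refine (convex_Ici (v / 2)).norm_image_sub_le_of_norm_hasDerivWithin_le
    (f := fun w => stdGaussianTail (t / √w))
    (fun w hw => (hasDerivAt_stdGaussianTail_div_sqrt t ?_).hasDerivWithinAt) (fun w hw => ?_)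
    (Set.mem_Ici.2 (half_le_self hv.le)) huv
  · exact (half_pos hv).trans_le hw
  · have hw : v ≤ 2 * w := by linarith [Set.mem_Ici.1 hw]
    rw [Real.norm_eq_abs, abs_div, abs_of_pos (hv.trans_le hw), abs_mul, mul_comm |_|,
      abs_of_nonneg (gaussianPDFReal_nonneg 0 1 _), ← one_div]
    gcongr
    exact abs_mul_gaussianPDFReal_le_one _

lemma abs_gaussianReal_real_Ici_sub_le (t : ℝ) (u : ℝ≥0) {v : ℝ≥0} (hv : v ≠ 0) :
    |(gaussianReal 0 u).real (Set.Ici t) - (gaussianReal 0 v).real (Set.Ici t)|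
      ≤ 2 * |(u : ℝ) / v - 1| := by
  have hv0 : (0 : ℝ) < v := NNReal.coe_pos.2 (pos_iff_ne_zero.2 hv)
  have hrel : |(u : ℝ) / v - 1| = (v : ℝ)⁻¹ * |(u : ℝ) - v| := by
    rw [div_sub_one hv0.ne', abs_div, abs_of_pos hv0, div_eq_inv_mul]
  rcases lt_or_ge (u : ℝ) (v / 2) with hu | hu
  · have hfar : 1 ≤ 2 * |(u : ℝ) / v - 1| := by
      have : (u : ℝ) / v ≤ 1 / 2 := by
        rw [div_le_iff₀ hv0]
        linarith
      linarith [neg_le_abs ((u : ℝ) / v - 1)]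
    refine le_trans ?_ hfar
    exact abs_sub_le_of_nonneg_of_le measureReal_nonneg measureReal_le_one
      measureReal_nonneg measureReal_le_one
  · have hu0 : u ≠ 0 := by
      rintro rfl
      linarith [NNReal.coe_zero]
    rw [gaussianReal_zero_real_Ici hu0, gaussianReal_zero_real_Ici hv, hrel]
    refine (abs_stdGaussianTail_div_sqrt_sub_le t hv0 hu).trans ?_
    exact le_mul_of_one_le_left (by positivity) one_le_two

end GaussianTail

section ThresholdGraph

/-- The law of the indicator of an edge of `gaussThreshGraph n thr`: a Bernoulli variable with
success probability `stdGaussianTail thr`. -/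
def edgeLaw (thr : ℝ) : Measure Bool := (gaussianReal 0 1).map fun y => decide (thr ≤ y)

/-- The graph whose edges are the non-loops marked `true`; the marks on the diagonal of `Sym2 V`
are ignored. -/
def graphOfIndicator {V : Type*} (b : Sym2 V → Bool) : SimpleGraph V :=
  SimpleGraph.fromRel fun i j => b s(i, j) = true

lemma measurable_decide_le (thr : ℝ) : Measurable fun y : ℝ => decide (thr ≤ y) := by
  refine measurable_to_bool ?_
  convert measurableSet_Ici (a := thr)
  ext y
  simp

instance (thr : ℝ) : IsProbabilityMeasure (edgeLaw thr) :=
  Measure.isProbabilityMeasure_map (measurable_decide_le thr).aemeasurable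

lemma edgeLaw_real_true (thr : ℝ) : (edgeLaw thr).real {true} = stdGaussianTail thr := by
  rw [edgeLaw, map_measureReal_apply (measurable_decide_le thr) (measurableSet_singleton true),
    stdGaussianTail]
  congr 1
  ext y
  simp

lemma edgeLaw_real_pos {thr : ℝ} (h : stdGaussianTail thr ∈ Set.Ioo (0 : ℝ) 1) (b : Bool) :
    0 < (edgeLaw thr).real {b} := by
  cases b
  · rw [← Bool.not_true, ← Bool.compl_singleton,
      probReal_compl_eq_one_sub (measurableSet_singleton true), edgeLaw_real_true]
    exact sub_pos.2 h.2
  · rw [edgeLaw_real_true]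
    exact h.1

lemma gaussThreshGraph_eq_map (n : ℕ) (thr : ℝ) :
    gaussThreshGraph n thr = (Measure.pi fun _ => edgeLaw thr).map graphOfIndicator := by
  have hpi : (Measure.pi fun _ : Sym2 (Fin n) => edgeLaw thr)
      = (Measure.pi fun _ => gaussianReal 0 1).map fun x e => decide (thr ≤ x e) :=
    (Measure.pi_map_pi fun _ => (measurable_decide_le thr).aemeasurable).symm
  have hmeas : Measurable fun (x : Sym2 (Fin n) → ℝ) e => decide (thr ≤ x e) :=
    measurable_pi_lambda _ fun e => (measurable_decide_le thr).comp (measurable_pi_apply e)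
  rw [hpi, Measure.map_map (measurable_of_finite _) hmeas]
  simp only [gaussThreshGraph, graphOfIndicator, Function.comp_def, decide_eq_true_eq]

lemma tvDist_gaussThreshGraph_le (n : ℕ) {a : ℝ} (ha : stdGaussianTail a ∈ Set.Ioo (0 : ℝ) 1)
    (b : ℝ) :
    tvDist (gaussThreshGraph n a) (gaussThreshGraph n b) ≤
      √(exp (n ^ 2 * ((stdGaussianTail b - stdGaussianTail a) ^ 2
        / (stdGaussianTail a * (1 - stdGaussianTail a)))) - 1) := by
  have hcard : (Fintype.card (Sym2 (Fin n)) : ℝ) ≤ n ^ 2 := by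
    have hsurj := Fintype.card_le_of_surjective _ (Sym2.mk_surjective (α := Fin n))
    rw [Fintype.card_prod, Fintype.card_fin, ← sq] at hsurj
    exact_mod_cast hsurj
  rw [tvDist_comm, gaussThreshGraph_eq_map, gaussThreshGraph_eq_map]
  calc _ ≤ tvDist (Measure.pi fun _ : Sym2 (Fin n) => edgeLaw b) (Measure.pi fun _ => edgeLaw a) :=
        tvDist_map_le (measurable_of_finite _)
    _ ≤ √(exp (∑ _ : Sym2 (Fin n), chiSqDiv (edgeLaw b) (edgeLaw a)) - 1) :=
        tvDist_pi_le fun _ => edgeLaw_real_pos ha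
    _ ≤ _ := by
        rw [Finset.sum_const, Finset.card_univ, nsmul_eq_mul,
          chiSqDiv_bool (by rwa [edgeLaw_real_true]), edgeLaw_real_true, edgeLaw_real_true]
        have := mul_pos ha.1 (sub_pos.2 ha.2)
        gcongr

end ThresholdGraph

section GaussianSum

variable {ι : Type*} [Fintype ι]

lemma map_sum_pi_gaussianReal (m : ι → ℝ) (v : ι → ℝ≥0) :
    (Measure.pi fun i => gaussianReal (m i) (v i)).map (fun y => ∑ i, y i)
      = gaussianReal (∑ i, m i) (∑ i, v i) := by
  have : IsProbabilityMeasure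
      ((Measure.pi fun i => gaussianReal (m i) (v i)).map fun y => ∑ i, y i) :=
    Measure.isProbabilityMeasure_map (by fun_prop)
  refine Measure.ext_of_charFun ?_
  ext s
  simp only [charFun_map_sum_pi_eq_prod, Finset.prod_apply, charFun_gaussianReal,
    ← Complex.exp_sum, Finset.sum_sub_distrib, Complex.ofReal_sum, NNReal.coe_sum, Finset.mul_sum,
    Finset.sum_mul, Finset.sum_div]

lemma map_sum_const_mul_pi_gaussianReal (c : ι → ℝ) (v : ι → ℝ≥0) :
    (Measure.pi fun i => gaussianReal 0 (v i)).map (fun y => ∑ i, c i * y i)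
      = gaussianReal 0 (∑ i, v i * c i ^ 2).toNNReal := by
  have hscale : (Measure.pi fun i => gaussianReal 0 (v i)).map (fun y i => c i * y i)
      = Measure.pi fun i => gaussianReal 0 (NNReal.mk (c i ^ 2) (sq_nonneg _) * v i) := by
    rw [Measure.pi_map_pi fun i => by fun_prop]
    simp only [gaussianReal_map_const_mul, mul_zero]
  have hcomp : (fun y : ι → ℝ => ∑ i, c i * y i) = (fun z => ∑ i, z i) ∘ fun y i => c i * y i := rfl
  rw [hcomp, ← Measure.map_map (by fun_prop) (by fun_prop), hscale, map_sum_pi_gaussianReal,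
    Finset.sum_const_zero]
  congr 1
  ext
  rw [Real.coe_toNNReal _ (by positivity), NNReal.coe_sum]
  simp [mul_comm]

end GaussianSum

section Variance

lemma integral_abs_sub_integral_le_sqrt_variance {Ω : Type*} [MeasurableSpace Ω] {μ : Measure Ω}
    [IsProbabilityMeasure μ] {X : Ω → ℝ} (hX : MemLp X 2 μ) :
    ∫ ω, |X ω - μ[X]| ∂μ ≤ √(Var[X; μ]) := by
  have hdev : MemLp (fun ω => |X ω - μ[X]|) 2 μ := (hX.sub (memLp_const _)).norm
  -- Cauchy–Schwarz, in the form: the variance of `|X - 𝔼 X|` is nonnegative.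
  have hvar := variance_nonneg (fun ω => |X ω - μ[X]|) μ
  rw [variance_eq_sub hdev, sub_nonneg] at hvar
  refine Real.le_sqrt_of_sq_le (hvar.trans_eq ?_)
  simp only [variance_eq_integral hX.aemeasurable, Pi.pow_apply, sq_abs]

lemma integral_sq_gaussianReal (v : ℝ≥0) : ∫ x, x ^ 2 ∂gaussianReal 0 v = v := by
  simpa [variance_eq_integral aemeasurable_id'] using
    variance_fun_id_gaussianReal (μ := 0) (v := v)

lemma memLp_sq_gaussianReal (m : ℝ) (v : ℝ≥0) : MemLp (fun x => x ^ 2) 2 (gaussianReal m v) := by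
  have h4 : Integrable (fun x : ℝ => ‖x‖ ^ 4) (gaussianReal m v) :=
    (memLp_id_gaussianReal' 4 (by norm_num)).integrable_norm_pow (by norm_num)
  rw [memLp_two_iff_integrable_sq (by fun_prop)]
  refine h4.congr (ae_of_all _ fun x => ?_)
  simp only [Real.norm_eq_abs, Even.pow_abs (by decide : Even 4), ← pow_mul]

lemma variance_sq_gaussianReal (v : ℝ≥0) :
    Var[fun x => x ^ 2; gaussianReal 0 v] = v ^ 2 * Var[fun x => x ^ 2; gaussianReal 0 1] := by
  rw [gaussianReal_zero_eq_map, variance_map (by fun_prop) (by fun_prop), ← variance_const_mul]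
  congr 1
  ext x
  rw [Function.comp_apply, mul_pow, Real.sq_sqrt v.coe_nonneg]

end Variance

section NormPow

variable {d : ℕ} {α : Fin d → ℝ}

lemma nrm_pow_self {q : ℕ} (hq : q ≠ 0) (hα : ∀ i, 0 ≤ α i) : nrm q α ^ q = ∑ i, α i ^ q := by
  rw [nrm, one_div, Real.rpow_inv_natCast_pow (Finset.sum_nonneg fun i _ => pow_nonneg (hα i) q) hq]

lemma nrm_pos (q : ℕ) (hα : ∀ i, 0 ≤ α i) (hα0 : α ≠ 0) : 0 < nrm q α := by
  obtain ⟨i, hi⟩ := Function.ne_iff.1 hα0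
  have hpos : 0 < α i := (hα i).lt_of_ne' hi
  exact Real.rpow_pos_of_pos (Finset.sum_pos' (fun j _ => pow_nonneg (hα j) q)
    ⟨i, Finset.mem_univ i, pow_pos hpos q⟩) _

end NormPow

section ConditionalVariance

variable {d : ℕ} {α : Fin d → ℝ}

instance : IsProbabilityMeasure (gaussPi d α) := by
  unfold gaussPi
  infer_instance

/-- The variance of `⟨x, Y⟩` for `Y ∼ N(0, D_α)`, that is, the conditional variance of `⟨X, Y⟩`
given `X = x` when `X` is independent of `Y`. -/
def condVariance (α x : Fin d → ℝ) : ℝ := ∑ i, α i * x i ^ 2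

lemma map_dotp_gaussPi (hα : ∀ i, 0 ≤ α i) (x : Fin d → ℝ) :
    (gaussPi d α).map (dotp x) = gaussianReal 0 (condVariance α x).toNNReal := by
  have hsum := map_sum_const_mul_pi_gaussianReal x fun i => (α i).toNNReal
  simp only [Real.coe_toNNReal _ (hα _)] at hsum
  exact hsum

lemma memLp_mul_sq_eval (i : Fin d) : MemLp (fun x => α i * x i ^ 2) 2 (gaussPi d α) :=
  ((memLp_sq_gaussianReal _ _).const_mul _).comp_measurePreserving
    (measurePreserving_eval (fun i => gaussianReal 0 (α i).toNNReal) i)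

lemma memLp_condVariance : MemLp (condVariance α) 2 (gaussPi d α) :=
  memLp_finsetSum _ fun i _ => memLp_mul_sq_eval i

lemma integral_condVariance (hα : ∀ i, 0 ≤ α i) :
    ∫ x, condVariance α x ∂gaussPi d α = nrm 2 α ^ 2 := by
  have hterm (i : Fin d) : ∫ x, α i * x i ^ 2 ∂gaussPi d α = α i ^ 2 := by
    have heval := integral_comp_eval (μ := fun i => gaussianReal 0 (α i).toNNReal) (i := i)
      (f := fun z : ℝ => α i * z ^ 2) (by fun_prop)
    rw [gaussPi, heval, integral_const_mul, integral_sq_gaussianReal, Real.coe_toNNReal _ (hα i),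
      sq]
  simp only [condVariance]
  rw [integral_finsetSum _ fun i _ => (memLp_mul_sq_eval i).integrable one_le_two,
    nrm_pow_self two_ne_zero hα]
  exact Finset.sum_congr rfl fun i _ => hterm i

lemma variance_condVariance (hα : ∀ i, 0 ≤ α i) :
    Var[condVariance α; gaussPi d α] = Var[fun x => x ^ 2; gaussianReal 0 1] * nrm 4 α ^ 4 := by
  have hsum : condVariance α = ∑ i, fun x : Fin d → ℝ => α i * x i ^ 2 := by
    ext x
    rw [condVariance, Finset.sum_apply]
  rw [hsum, gaussPi, variance_sum_pi fun i => (memLp_sq_gaussianReal _ _).const_mul (α i),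
    nrm_pow_self four_ne_zero hα, Finset.mul_sum]
  refine Finset.sum_congr rfl fun i _ => ?_
  rw [variance_const_mul, variance_sq_gaussianReal, Real.coe_toNNReal _ (hα i)]
  ring

lemma integral_abs_condVariance_div_sub_one_le (hα : ∀ i, 0 ≤ α i) (hα0 : α ≠ 0) :
    ∫ x, |condVariance α x / nrm 2 α ^ 2 - 1| ∂gaussPi d α
      ≤ √(Var[fun x => x ^ 2; gaussianReal 0 1]) * (nrm 4 α / nrm 2 α) ^ 2 := by
  have h2 : 0 < nrm 2 α ^ 2 := pow_pos (nrm_pos 2 hα hα0) 2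
  have hdev := integral_abs_sub_integral_le_sqrt_variance (memLp_condVariance (α := α))
  rw [integral_condVariance hα, variance_condVariance hα, Real.sqrt_mul (variance_nonneg _ _),
    show nrm 4 α ^ 4 = (nrm 4 α ^ 2) ^ 2 by ring, Real.sqrt_sq (sq_nonneg _)] at hdev
  simp only [div_sub_one h2.ne', abs_div, abs_of_pos h2, integral_div]
  rw [div_pow, ← mul_div_assoc]
  gcongr

end ConditionalVariance

section Threshold

lemma prod_real_eq_integral {Ω Ω' : Type*} [MeasurableSpace Ω] [MeasurableSpace Ω']
    (μ : Measure Ω) (ν : Measure Ω') [IsFiniteMeasure ν] {s : Set (Ω × Ω')}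
    (hs : MeasurableSet s) :
    (μ.prod ν).real s = ∫ x, ν.real (Prod.mk x ⁻¹' s) ∂μ := by
  rw [measureReal_def, Measure.prod_apply hs]
  exact (integral_toReal (measurable_measure_prodMk_left hs).aemeasurable
    (ae_of_all _ fun _ => measure_lt_top _ _)).symm

variable {d : ℕ} {α : Fin d → ℝ} {p t : ℝ}

lemma measurableSet_le_dotp (d : ℕ) (t : ℝ) :
    MeasurableSet {xy : (Fin d → ℝ) × (Fin d → ℝ) | t ≤ dotp xy.1 xy.2} := by
  refine measurableSet_le measurable_const ?_
  unfold dotp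
  fun_prop

lemma gaussPi_real_le_dotp (hα : ∀ i, 0 ≤ α i) (t : ℝ) (x : Fin d → ℝ) :
    (gaussPi d α).real (Prod.mk x ⁻¹' {xy | t ≤ dotp xy.1 xy.2})
      = (gaussianReal 0 (condVariance α x).toNNReal).real (Set.Ici t) := by
  have hdotp : Measurable (dotp x) := by
    unfold dotp
    fun_prop
  rw [← map_dotp_gaussPi hα, map_measureReal_apply hdotp measurableSet_Ici]
  rfl

lemma IsThreshold.eq_integral (hα : ∀ i, 0 ≤ α i) (hp : 0 ≤ p) (ht : IsThreshold d α p t) :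
    p = ∫ x, (gaussianReal 0 (condVariance α x).toNNReal).real (Set.Ici t) ∂gaussPi d α := by
  simp only [← gaussPi_real_le_dotp hα]
  rw [← prod_real_eq_integral _ _ (measurableSet_le_dotp d t), measureReal_def, ht,
    ENNReal.toReal_ofReal hp]

lemma abs_sub_stdGaussianTail_le_of_isThreshold (hα : ∀ i, 0 ≤ α i) (hα0 : α ≠ 0) (hp : 0 ≤ p)
    (ht : IsThreshold d α p t) :
    |p - stdGaussianTail (t / nrm 2 α)|
      ≤ 2 * √(Var[fun x => x ^ 2; gaussianReal 0 1]) * (nrm 4 α / nrm 2 α) ^ 2 := by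
  set F : (Fin d → ℝ) → ℝ :=
    fun x => (gaussianReal 0 (condVariance α x).toNNReal).real (Set.Ici t) with hF
  set q := stdGaussianTail (t / nrm 2 α)
  have h2 : 0 < nrm 2 α := nrm_pos 2 hα hα0
  have hFint : Integrable F (gaussPi d α) := by
    simp only [hF, ← gaussPi_real_le_dotp hα]
    exact Measure.integrable_measure_prodMk_left (measurableSet_le_dotp d t) (measure_ne_top _ _)
  have hpq : p - q = ∫ x, (F x - q) ∂gaussPi d α := by
    rw [integral_sub hFint (integrable_const _), ← ht.eq_integral hα hp, integral_const,
      probReal_univ, one_smul]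
  have hpoint (x : Fin d → ℝ) : |F x - q| ≤ 2 * |condVariance α x / nrm 2 α ^ 2 - 1| := by
    have hσ : (nrm 2 α ^ 2).toNNReal ≠ 0 := (Real.toNNReal_pos.2 (pow_pos h2 2)).ne'
    have hcond : 0 ≤ condVariance α x :=
      Finset.sum_nonneg fun i _ => mul_nonneg (hα i) (sq_nonneg _)
    simpa only [gaussianReal_zero_real_Ici hσ, Real.coe_toNNReal _ (sq_nonneg (nrm 2 α)),
      Real.coe_toNNReal _ hcond, Real.sqrt_sq h2.le] using
      abs_gaussianReal_real_Ici_sub_le t (condVariance α x).toNNReal hσ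
  have hint : Integrable (fun x => |condVariance α x / nrm 2 α ^ 2 - 1|) (gaussPi d α) :=
    ((memLp_condVariance.integrable one_le_two).div_const _ |>.sub (integrable_const _)).abs
  calc |p - q| ≤ ∫ x, |F x - q| ∂gaussPi d α := hpq ▸ abs_integral_le_integral_abs
    _ ≤ ∫ x, 2 * |condVariance α x / nrm 2 α ^ 2 - 1| ∂gaussPi d α :=
        integral_mono (hFint.sub (integrable_const _)).abs (hint.const_mul 2) hpoint
    _ ≤ _ := by
        rw [integral_const_mul, mul_assoc]
        gcongr
        exact integral_abs_condVariance_div_sub_one_le hα hα0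

lemma tvDist_gaussThreshGraph_le_of_isThreshold (n : ℕ) {tp : ℝ} (hp : p ∈ Set.Ioo (0 : ℝ) 1)
    (htp : stdGaussianTail tp = p) (hα : ∀ i, 0 ≤ α i) (hα0 : α ≠ 0) (ht : IsThreshold d α p t) :
    tvDist (gaussThreshGraph n tp) (gaussThreshGraph n (t / nrm 2 α)) ≤
      √(exp (4 * Var[fun x => x ^ 2; gaussianReal 0 1] / (p * (1 - p))
        * (n ^ 2 * (nrm 4 α / nrm 2 α) ^ 4)) - 1) := by
  set C := Var[fun x => x ^ 2; gaussianReal 0 1]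
  have hpp : 0 < p * (1 - p) := mul_pos hp.1 (sub_pos.2 hp.2)
  have hgap : (stdGaussianTail (t / nrm 2 α) - p) ^ 2 ≤ 4 * C * (nrm 4 α / nrm 2 α) ^ 4 :=
    calc (stdGaussianTail (t / nrm 2 α) - p) ^ 2 = |p - stdGaussianTail (t / nrm 2 α)| ^ 2 := by
          rw [abs_sub_comm, sq_abs]
      _ ≤ (2 * √C * (nrm 4 α / nrm 2 α) ^ 2) ^ 2 := by
          gcongr
          exact abs_sub_stdGaussianTail_le_of_isThreshold hα hα0 hp.1.le ht
      _ = 4 * √C ^ 2 * (nrm 4 α / nrm 2 α) ^ 4 := by ring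
      _ = 4 * C * (nrm 4 α / nrm 2 α) ^ 4 := by rw [Real.sq_sqrt (variance_nonneg _ _)]
  calc _ ≤ √(exp (n ^ 2 * ((stdGaussianTail (t / nrm 2 α) - p) ^ 2 / (p * (1 - p)))) - 1) := by
        rw [← htp] at hp ⊢
        exact tvDist_gaussThreshGraph_le n hp _
    _ ≤ √(exp (n ^ 2 * (4 * C * (nrm 4 α / nrm 2 α) ^ 4 / (p * (1 - p)))) - 1) := by gcongr
    _ = _ := by ring_nf

end Threshold

lemma tendsto_pow_mul_zero_of_le {k l : ℕ} (hkl : k ≤ l) {u : ℕ → ℝ} (hu : ∀ n, 0 ≤ u n)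
    (h : Tendsto (fun n : ℕ => (n : ℝ) ^ l * u n) atTop (nhds 0)) :
    Tendsto (fun n : ℕ => (n : ℝ) ^ k * u n) atTop (nhds 0) := by
  refine squeeze_zero' (.of_forall fun n => mul_nonneg (by positivity) (hu n)) ?_ h
  filter_upwards [eventually_ge_atTop 1] with n hn
  exact mul_le_mul_of_nonneg_right (pow_le_pow_right₀ (mod_cast hn) hkl) (hu n)

theorem tv_threshold_graphs_tendsto_zero_general (p : ℝ) (hp : p ∈ Set.Ioo (0 : ℝ) 1)
    (tp : ℝ) (htp : (gaussianReal 0 1) (Set.Ici tp) = ENNReal.ofReal p)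
    (d : ℕ → ℕ) (α : (n : ℕ) → Fin (d n) → ℝ)
    (hα : ∀ n i, 0 ≤ α n i) (hα0 : ∀ n, α n ≠ 0)
    (t : ℕ → ℝ) (ht : ∀ n, IsThreshold (d n) (α n) p (t n))
    (hlim : Tendsto (fun (n : ℕ) => (n : ℝ) ^ 2 * (nrm 4 (α n) / nrm 2 (α n)) ^ 4)
      atTop (nhds 0)) :
    Tendsto (fun n => tvDist (gaussThreshGraph n tp)
        (gaussThreshGraph n (t n / nrm 2 (α n))))
      atTop (nhds 0) := by
  have hedge : stdGaussianTail tp = p := by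
    rw [stdGaussianTail, measureReal_def, htp, ENNReal.toReal_ofReal hp.1.le]
  refine squeeze_zero (fun _ => tvDist_nonneg) (fun n =>
    tvDist_gaussThreshGraph_le_of_isThreshold n hp hedge (hα n) (hα0 n) (ht n)) ?_
  set c := 4 * Var[fun x => x ^ 2; gaussianReal 0 1] / (p * (1 - p))
  have hcont : Continuous fun y => √(exp (c * y) - 1) := by fun_prop
  have hzero : √(exp (c * 0) - 1) = 0 := by simp
  exact hzero ▸ (hcont.tendsto 0).comp hlim

/-- Lemma 10. If `n³(‖α‖₄/‖α‖₂)⁴ → 0`, then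
`TV(K_p(M(n)), H_{p,α}(M(n))) → 0`, where `K_p` thresholds the Gaussian entries at
`Φ⁻¹(p)` (so each edge appears with probability `p`) and `H_{p,α}` thresholds them at
`t_{p,α}/‖α‖₂`. -/
theorem tv_threshold_graphs_tendsto_zero (p : ℝ) (hp : p ∈ Set.Ioo (0 : ℝ) 1)
    (tp : ℝ) (htp : (gaussianReal 0 1) (Set.Ici tp) = ENNReal.ofReal p)
    (d : ℕ → ℕ) (α : (n : ℕ) → Fin (d n) → ℝ)
    (hα : ∀ n i, α n i ∈ Set.Icc (0 : ℝ) 1)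
    (hmax : ∀ n, ∃ i, α n i = 1)
    (t : ℕ → ℝ) (ht : ∀ n, IsThreshold (d n) (α n) p (t n))
    (hlim : Tendsto (fun (n : ℕ) => (n : ℝ) ^ 3 * (nrm 4 (α n) / nrm 2 (α n)) ^ 4)
      atTop (nhds 0)) :
    Tendsto (fun n => tvDist (gaussThreshGraph n tp)
        (gaussThreshGraph n (t n / nrm 2 (α n))))
      atTop (nhds 0) := by
  have hα0 (n : ℕ) : α n ≠ 0 := by
    obtain ⟨i, hi⟩ := hmax n
    exact Function.ne_iff.2 ⟨i, by simp [hi]⟩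
  exact tv_threshold_graphs_tendsto_zero_general p hp tp htp d α (fun n i => (hα n i).1) hα0 t ht
    (tendsto_pow_mul_zero_of_le (by norm_num) (fun n => by positivity) hlim)

end
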